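/- arXiv:2012.08738 — 7 statements merged into one kernel-verified Lean document; each statement's English description precedes it below -/
import Mathlib

section
/- Let V be a finite set and f : 2^V → ℝ a set function. Then f is submodular (i.e. f(Y∪{v}) − f(Y) ≤ f(X∪{v}) − f(X) for all X ⊆ Y ⊆ V and v ∈ V∖Y) if and only if for all disjoint subsets X, L ⊆ V one has f(X∪L) − f(X) ≤ Σ_{v∈L} (f(X∪{v}) − f(X)). (Equivalently: f is submodular if and only if its submodularity ratio γ_{i,j} is at least 1 for all parameters i, j.) -/
/-- A set function `f` is submodular iff for all disjoint `X, L ⊆ V` one has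
`f (X ∪ L) - f X ≤ ∑_{v ∈ L} (f (X ∪ {v}) - f X)` (i.e. the submodularity ratio is
at least 1 for all parameters). -/
theorem submodular_iff_sum_marginals {V : Type*} [Fintype V] [DecidableEq V]
    (f : Finset V → ℝ) :
    (∀ X Y : Finset V, X ⊆ Y → ∀ v ∉ Y, f (insert v Y) - f Y ≤ f (insert v X) - f X)
    ↔ ∀ X L : Finset V, Disjoint X L →
        f (X ∪ L) - f X ≤ ∑ v ∈ L, (f (insert v X) - f X) := by
  constructor
  · intro h X L
    induction L using Finset.induction_on with
    | empty => intro _; simp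
    | insert a s ha ih =>
      intro hd
      rw [Finset.disjoint_insert_right] at hd
      have h1 := ih hd.2
      have h2 := h X (X ∪ s) Finset.subset_union_left a (by simp [hd.1, ha])
      rw [Finset.sum_insert ha, Finset.union_insert]
      linarith
  · intro h X Y hXY v hv
    have key : ∀ D : Finset V, v ∉ X ∪ D →
        f (insert v (X ∪ D)) - f (X ∪ D) ≤ f (insert v X) - f X := by
      intro D
      induction D using Finset.induction_on with
      | empty => intro _; simp
      | insert a s ha ih =>
        intro hv
        rw [Finset.union_insert] at hv ⊢
        rw [Finset.mem_insert, not_or] at hv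
        have h1 := ih hv.2
        by_cases hm : a ∈ X ∪ s
        · rwa [Finset.insert_eq_of_mem hm]
        · have h2 := h (X ∪ s) {v, a} (by
            rw [Finset.disjoint_insert_right, Finset.disjoint_singleton_right]
            exact ⟨hv.2, hm⟩)
          rw [Finset.sum_pair hv.1] at h2
          have e : (X ∪ s) ∪ {v, a} = insert v (insert a (X ∪ s)) := by
            ext x; simp only [Finset.mem_union, Finset.mem_insert, Finset.mem_singleton]; tauto
          rw [e] at h2
          linarith
    have := key Y
    rw [Finset.union_eq_right.mpr hXY] at this
    exact this hv
end

section
/- Let V be a finite set, f : 2^V → ℝ a monotone function with f(S) ≥ 0 for all S, and let a partition matroid constraint be given by a partition B₁,…,B_k of V and thresholds d₁,…,d_k, with d = Σ_i d_i and d̄ = min_i d_i. Let OPT be a feasible set maximizing f among all feasible sets. Let X ⊆ V with |X| = j < d̄, and let γ with 0 ≤ γ ≤ 1 be a submodularity-ratio lower bound for f with parameters (j+1, d). Then there exists v ∈ V∖X such that X∪{v} is feasible and f(X∪{v}) − f(X) ≥ (γ/d)·(f(OPT) − f(X)). -/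
/-- Greedy progress for monotone `f` under a partition matroid constraint: if
`|X| = j < d̄` and `γ ∈ [0,1]` is a submodularity-ratio lower bound for `f` with
parameters `(j+1, d)`, then some feasible single-element addition gains at least
`(γ/d)(f OPT - f X)`. -/
theorem greedy_progress_monotone {V : Type*} [Fintype V] [DecidableEq V] {k : ℕ}
    (hk : 0 < k)
    (B : Fin k → Finset V) (hpart : ∀ v : V, ∃! i, v ∈ B i)
    (hBne : ∀ i, (B i).Nonempty)
    (D : Fin k → ℕ) (hD : ∀ i, 1 ≤ D i ∧ D i ≤ (B i).card)
    (dbar : ℕ)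
    (hdbar : dbar = Finset.univ.inf' ⟨⟨0, hk⟩, Finset.mem_univ _⟩ D)
    (f : Finset V → ℝ) (hf0 : ∀ S, 0 ≤ f S)
    (hmono : ∀ X Y : Finset V, X ⊆ Y → f X ≤ f Y)
    (OPT : Finset V) (hOPTfeas : ∀ i, (OPT ∩ B i).card ≤ D i)
    (hOPTmax : ∀ S : Finset V, (∀ i, (S ∩ B i).card ≤ D i) → f S ≤ f OPT)
    (X : Finset V) (j : ℕ) (hXcard : X.card = j) (hj : j < dbar)
    (γ : ℝ) (hγ0 : 0 ≤ γ) (hγ1 : γ ≤ 1)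
    (hγ : ∀ S L : Finset V, Disjoint S L → S.card < j + 1 → L.card ≤ ∑ i, D i →
      γ * (f (S ∪ L) - f S) ≤ ∑ v ∈ L, (f (insert v S) - f S)) :
    ∃ v ∉ X, (∀ i, ((insert v X) ∩ B i).card ≤ D i) ∧
      f (insert v X) - f X ≥ (γ / (∑ i, D i : ℝ)) * (f OPT - f X) := by
  have hDle : ∀ i, X.card + 1 ≤ D i := by
    intro i
    have : dbar ≤ D i := hdbar ▸ Finset.inf'_le D (Finset.mem_univ i)
    omega
  have hfeas : ∀ v, ∀ i, ((insert v X) ∩ B i).card ≤ D i := fun v i =>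
    (Finset.card_le_card Finset.inter_subset_left).trans
      ((Finset.card_insert_le v X).trans (hDle i))
  obtain ⟨v0, -, hv0⟩ : ∃ v ∈ B ⟨0, hk⟩, v ∉ X := by
    apply Finset.exists_mem_notMem_of_card_lt_card
    have h1 := hDle ⟨0, hk⟩
    have h2 := (hD ⟨0, hk⟩).2
    omega
  have hOc : OPT.card ≤ ∑ i, D i := by
    have hsub : OPT ⊆ Finset.univ.biUnion (fun i => OPT ∩ B i) := by
      intro v hv
      obtain ⟨i, hi, -⟩ := hpart v
      exact Finset.mem_biUnion.2 ⟨i, Finset.mem_univ _, Finset.mem_inter.2 ⟨hv, hi⟩⟩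
    exact (Finset.card_le_card hsub).trans (Finset.card_biUnion_le.trans
      (Finset.sum_le_sum fun i _ => hOPTfeas i))
  have hLc : (OPT \ X).card ≤ ∑ i, D i :=
    (Finset.card_le_card Finset.sdiff_subset).trans hOc
  have hγL := hγ X (OPT \ X) Finset.disjoint_sdiff (by omega) hLc
  have hdpos : (0 : ℝ) < ∑ i, (D i : ℝ) :=
    Finset.sum_pos (fun i _ => by exact_mod_cast (hD i).1) ⟨⟨0, hk⟩, Finset.mem_univ _⟩
  have hLc' : ((OPT \ X).card : ℝ) ≤ ∑ i, (D i : ℝ) := by exact_mod_cast hLc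
  by_contra! hcon
  have hlt : ∀ v ∉ X, f (insert v X) - f X < (γ / (∑ i, D i : ℝ)) * (f OPT - f X) :=
    fun v hv => hcon v hv (hfeas v)
  have hdc : (∑ i, (D i : ℝ)) * ((γ / (∑ i, D i : ℝ)) * (f OPT - f X))
      = γ * (f OPT - f X) := by
    field_simp
  generalize (γ / (∑ i, D i : ℝ)) * (f OPT - f X) = c at *
  have hc : 0 < c := by
    have h1 := hmono X (insert v0 X) (Finset.subset_insert _ _)
    have h2 := hlt v0 hv0
    linarith
  have h3 : f OPT ≤ f (X ∪ OPT \ X) := hmono _ _ (by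
    rw [Finset.union_sdiff_self_eq_union]; exact Finset.subset_union_right)
  have h4 : γ * (f OPT - f X) ≤ γ * (f (X ∪ OPT \ X) - f X) :=
    mul_le_mul_of_nonneg_left (by linarith) hγ0
  have h5 : ∑ v ∈ OPT \ X, (f (insert v X) - f X) < (∑ i, (D i : ℝ)) * c := by
    rcases (OPT \ X).eq_empty_or_nonempty with h | h
    · rw [h, Finset.sum_empty]; positivity
    · calc _ < ∑ v ∈ OPT \ X, c :=
            Finset.sum_lt_sum_of_nonempty h fun v hv => hlt v (Finset.mem_sdiff.1 hv).2
        _ = ((OPT \ X).card : ℝ) * c := by simp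
        _ ≤ _ := mul_le_mul_of_nonneg_right hLc' hc.le
  linarith
end

section
/- Let V be a finite set, f : 2^V → ℝ a monotone function with f(S) ≥ 0 for all S, and let a partition matroid constraint be given by a partition B₁,…,B_k of V and thresholds d₁,…,d_k with d̄ = min_i d_i. Let d*₁,…,d*_k be a second threshold vector with 1 ≤ d*_i ≤ |B_i|, d* = Σ_i d*_i and d̄* = min_i d*_i, and assume d̄* ≥ d̄. Let OPT* be a D*-feasible set maximizing f among D*-feasible sets. Let X ⊆ V with |X| = j < d̄, and let γ with 0 ≤ γ ≤ 1 be a submodularity-ratio lower bound for f with parameters (j+1, d*). Then there exists v ∈ V∖X such that X∪{v} is both feasible and D*-feasible and f(X∪{v}) − f(X) ≥ (γ/d*)·(f(OPT*) − f(X)). -/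
/-- Greedy progress for monotone `f` with respect to a second threshold vector `D*`
with `d̄* ≥ d̄`: if `|X| = j < d̄` and `γ ∈ [0,1]` is a submodularity-ratio lower bound
for `f` with parameters `(j+1, d*)`, then some single-element addition is both feasible
and `D*`-feasible and gains at least `(γ/d*)(f OPT* - f X)`. -/
theorem greedy_progress_monotone_dyn {V : Type*} [Fintype V] [DecidableEq V] {k : ℕ}
    (hk : 0 < k)
    (B : Fin k → Finset V) (hpart : ∀ v : V, ∃! i, v ∈ B i)
    (hBne : ∀ i, (B i).Nonempty)
    (D Dstar : Fin k → ℕ)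
    (hD : ∀ i, 1 ≤ D i ∧ D i ≤ (B i).card)
    (hDstar : ∀ i, 1 ≤ Dstar i ∧ Dstar i ≤ (B i).card)
    (dbar dbarstar : ℕ)
    (hdbar : dbar = Finset.univ.inf' ⟨⟨0, hk⟩, Finset.mem_univ _⟩ D)
    (hdbarstar : dbarstar = Finset.univ.inf' ⟨⟨0, hk⟩, Finset.mem_univ _⟩ Dstar)
    (hge : dbar ≤ dbarstar)
    (f : Finset V → ℝ) (hf0 : ∀ S, 0 ≤ f S)
    (hmono : ∀ X Y : Finset V, X ⊆ Y → f X ≤ f Y)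
    (OPTstar : Finset V) (hOPTfeas : ∀ i, (OPTstar ∩ B i).card ≤ Dstar i)
    (hOPTmax : ∀ S : Finset V, (∀ i, (S ∩ B i).card ≤ Dstar i) → f S ≤ f OPTstar)
    (X : Finset V) (j : ℕ) (hXcard : X.card = j) (hj : j < dbar)
    (γ : ℝ) (hγ0 : 0 ≤ γ) (hγ1 : γ ≤ 1)
    (hγ : ∀ S L : Finset V, Disjoint S L → S.card < j + 1 → L.card ≤ ∑ i, Dstar i →
      γ * (f (S ∪ L) - f S) ≤ ∑ v ∈ L, (f (insert v S) - f S)) :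
    ∃ v ∉ X, (∀ i, ((insert v X) ∩ B i).card ≤ D i) ∧
      (∀ i, ((insert v X) ∩ B i).card ≤ Dstar i) ∧
      f (insert v X) - f X ≥ (γ / (∑ i, Dstar i : ℝ)) * (f OPTstar - f X) := by
  have hDb : ∀ i, j + 1 ≤ D i := by
    intro i
    have h := Finset.inf'_le (s := Finset.univ) D (Finset.mem_univ i)
    rw [hdbar] at hj
    exact lt_of_lt_of_le hj h
  have hDs : ∀ i, j + 1 ≤ Dstar i := by
    intro i
    have h := Finset.inf'_le (s := Finset.univ) Dstar (Finset.mem_univ i)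
    have h2 := lt_of_lt_of_le hj hge
    rw [hdbarstar] at h2
    exact lt_of_lt_of_le h2 h
  have hins : ∀ v i, ((insert v X) ∩ B i).card ≤ j + 1 := by
    intro v i
    have h1 := Finset.card_le_card (Finset.inter_subset_left (s₁ := insert v X) (s₂ := B i))
    have h2 := Finset.card_insert_le v X
    omega
  suffices h : ∃ v ∉ X, f (insert v X) - f X ≥
      (γ / (∑ i, Dstar i : ℝ)) * (f OPTstar - f X) by
    obtain ⟨v, hv, h⟩ := h
    exact ⟨v, hv, fun i => (hins v i).trans (hDb i), fun i => (hins v i).trans (hDs i), h⟩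
  have hXopt : f X ≤ f OPTstar := by
    apply hOPTmax
    intro i
    have h1 := Finset.card_le_card (Finset.inter_subset_left (s₁ := X) (s₂ := B i))
    have := hDs i
    omega
  have hpos : (0 : ℝ) < ∑ i, (Dstar i : ℝ) := by
    apply Finset.sum_pos
    · intro i _
      exact_mod_cast (hDstar i).1
    · exact ⟨⟨0, hk⟩, Finset.mem_univ _⟩
  have hLcard : (OPTstar \ X).card ≤ ∑ i, Dstar i := by
    calc (OPTstar \ X).card ≤ OPTstar.card := Finset.card_le_card Finset.sdiff_subset
      _ ≤ (Finset.univ.biUnion fun i => OPTstar ∩ B i).card := by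
          apply Finset.card_le_card
          intro v hv
          obtain ⟨i, hi, -⟩ := hpart v
          exact Finset.mem_biUnion.2 ⟨i, Finset.mem_univ _, Finset.mem_inter.2 ⟨hv, hi⟩⟩
      _ ≤ ∑ i, (OPTstar ∩ B i).card := Finset.card_biUnion_le
      _ ≤ ∑ i, Dstar i := Finset.sum_le_sum fun i _ => hOPTfeas i
  by_cases hL : (OPTstar \ X).Nonempty
  · by_contra hcon
    push Not at hcon
    have h1 := hγ X (OPTstar \ X) Finset.disjoint_sdiff (by omega) hLcard
    have h2 : ∑ v ∈ OPTstar \ X, (f (insert v X) - f X) <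
        ∑ v ∈ OPTstar \ X, (γ / (∑ i, Dstar i : ℝ)) * (f OPTstar - f X) :=
      Finset.sum_lt_sum_of_nonempty hL fun v hv => hcon v (Finset.mem_sdiff.1 hv).2
    rw [Finset.sum_const, nsmul_eq_mul] at h2
    have h3 : ((OPTstar \ X).card : ℝ) ≤ ∑ i, (Dstar i : ℝ) := by exact_mod_cast hLcard
    have h4 : 0 ≤ (γ / (∑ i, Dstar i : ℝ)) * (f OPTstar - f X) :=
      mul_nonneg (div_nonneg hγ0 hpos.le) (sub_nonneg.2 hXopt)
    have h5 := mul_le_mul_of_nonneg_right h3 h4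
    have h6 : (∑ i, (Dstar i : ℝ)) * ((γ / (∑ i, Dstar i : ℝ)) * (f OPTstar - f X))
        = γ * (f OPTstar - f X) := by
      field_simp
    have h7 : f OPTstar ≤ f (X ∪ OPTstar \ X) := hmono _ _ (by
      rw [Finset.union_sdiff_self_eq_union]; exact Finset.subset_union_right)
    have h8 := mul_le_mul_of_nonneg_left (sub_le_sub_right h7 (f X)) hγ0
    linarith
  · have hsub : OPTstar ⊆ X := by
      rwa [Finset.not_nonempty_iff_eq_empty, Finset.sdiff_eq_empty_iff_subset] at hL
    have heq : f OPTstar - f X = 0 := sub_eq_zero.2 (le_antisymm (hmono _ _ hsub) hXopt)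
    obtain ⟨v, -, hv⟩ := Finset.exists_mem_notMem_of_card_lt_card (s := X) (t := B ⟨0, hk⟩) (by
      have := hDb ⟨0, hk⟩
      have := (hD ⟨0, hk⟩).2
      omega)
    refine ⟨v, hv, ?_⟩
    rw [heq, mul_zero]
    exact sub_nonneg.2 (hmono _ _ (Finset.subset_insert v X))
end

section
/- Let V be a finite set, f : 2^V → ℝ a monotone function with f(S) ≥ 0 for all S, a partition matroid constraint with d = Σ_i d_i and d̄ = min_i d_i, and OPT a feasible maximizer of f. Let h be an integer with 0 ≤ h < d̄, and let γ with 0 ≤ γ ≤ 1 be a submodularity-ratio lower bound for f with parameters (h+1, d). If X ⊆ V satisfies |X| ≤ h and f(X) ≥ [1 − (1 − γ/d)^h]·f(OPT), then for any element v*_X maximizing f(X∪{v}) over all v ∈ V∖X with X∪{v} feasible, the set X* = X∪{v*_X} is feasible, satisfies |X*| ≤ h+1, and f(X*) ≥ [1 − (1 − γ/d)^{h+1}]·f(OPT). -/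
/-- Induction step for the monotone approximation guarantee: if `|X| ≤ h < d̄`,
`γ ∈ [0,1]` is a submodularity-ratio lower bound for `f` with parameters `(h+1, d)`,
and `f X ≥ [1-(1-γ/d)^h]·f OPT`, then for any greedy addition `v*` the set
`X* = X ∪ {v*}` is feasible, has `|X*| ≤ h+1`, and satisfies
`f X* ≥ [1-(1-γ/d)^{h+1}]·f OPT`. -/
theorem greedy_step_monotone {V : Type*} [Fintype V] [DecidableEq V] {k : ℕ}
    (hk : 0 < k)
    (B : Fin k → Finset V) (hpart : ∀ v : V, ∃! i, v ∈ B i)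
    (hBne : ∀ i, (B i).Nonempty)
    (D : Fin k → ℕ) (hD : ∀ i, 1 ≤ D i ∧ D i ≤ (B i).card)
    (dbar : ℕ)
    (hdbar : dbar = Finset.univ.inf' ⟨⟨0, hk⟩, Finset.mem_univ _⟩ D)
    (f : Finset V → ℝ) (hf0 : ∀ S, 0 ≤ f S)
    (hmono : ∀ X Y : Finset V, X ⊆ Y → f X ≤ f Y)
    (OPT : Finset V) (hOPTfeas : ∀ i, (OPT ∩ B i).card ≤ D i)
    (hOPTmax : ∀ S : Finset V, (∀ i, (S ∩ B i).card ≤ D i) → f S ≤ f OPT)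
    (h : ℕ) (hh : h < dbar)
    (γ : ℝ) (hγ0 : 0 ≤ γ) (hγ1 : γ ≤ 1)
    (hγ : ∀ S L : Finset V, Disjoint S L → S.card < h + 1 → L.card ≤ ∑ i, D i →
      γ * (f (S ∪ L) - f S) ≤ ∑ v ∈ L, (f (insert v S) - f S))
    (X : Finset V) (hXcard : X.card ≤ h)
    (hXval : f X ≥ (1 - (1 - γ / (∑ i, D i : ℝ)) ^ h) * f OPT)
    (vstar : V) (hv_notmem : vstar ∉ X)
    (hv_feas : ∀ i, ((insert vstar X) ∩ B i).card ≤ D i)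
    (hv_max : ∀ w ∉ X, (∀ i, ((insert w X) ∩ B i).card ≤ D i) →
      f (insert w X) ≤ f (insert vstar X)) :
    (∀ i, ((insert vstar X) ∩ B i).card ≤ D i) ∧
    (insert vstar X).card ≤ h + 1 ∧
    f (insert vstar X) ≥ (1 - (1 - γ / (∑ i, D i : ℝ)) ^ (h + 1)) * f OPT := by
  have hDh : ∀ i, h + 1 ≤ D i := by
    intro i
    have h1 : dbar ≤ D i := by
      rw [hdbar]
      exact Finset.inf'_le _ (Finset.mem_univ i)
    omega
  have hcard : ∀ w, (insert w X).card ≤ h + 1 := fun w =>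
    (Finset.card_insert_le w X).trans (by omega)
  have hfeas : ∀ w i, ((insert w X) ∩ B i).card ≤ D i := fun w i =>
    (Finset.card_le_card Finset.inter_subset_left).trans ((hcard w).trans (hDh i))
  refine ⟨hv_feas, hcard vstar, ?_⟩
  have hOPTcard : OPT.card ≤ ∑ i, D i := by
    have hsub : OPT ⊆ Finset.univ.biUnion (fun i => OPT ∩ B i) := by
      intro v hv
      obtain ⟨i, hi, -⟩ := hpart v
      exact Finset.mem_biUnion.2 ⟨i, Finset.mem_univ i, Finset.mem_inter.2 ⟨hv, hi⟩⟩
    exact (Finset.card_le_card hsub).trans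
      (Finset.card_biUnion_le.trans (Finset.sum_le_sum fun i _ => hOPTfeas i))
  have hLcard : (OPT \ X).card ≤ ∑ i, D i :=
    (Finset.card_le_card Finset.sdiff_subset).trans hOPTcard
  have hkey := hγ X (OPT \ X) Finset.disjoint_sdiff (by omega) hLcard
  have hle : f OPT ≤ f (X ∪ (OPT \ X)) := hmono _ _ (by simp)
  have hsum : ∑ v ∈ OPT \ X, (f (insert v X) - f X)
      ≤ (OPT \ X).card • (f (insert vstar X) - f X) := by
    apply Finset.sum_le_card_nsmul
    intro v hv
    have := hv_max v (Finset.mem_sdiff.1 hv).2 (hfeas v)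
    linarith
  rw [nsmul_eq_mul] at hsum
  have hΔ : 0 ≤ f (insert vstar X) - f X :=
    sub_nonneg.2 (hmono _ _ (Finset.subset_insert _ _))
  have hLc : ((OPT \ X).card : ℝ) ≤ ∑ i, (D i : ℝ) := by exact_mod_cast hLcard
  have hd1 : (1 : ℝ) ≤ ∑ i, (D i : ℝ) := by
    have h1 : D ⟨0, hk⟩ ≤ ∑ i, D i :=
      Finset.single_le_sum (f := D) (fun _ _ => Nat.zero_le _) (Finset.mem_univ _)
    have h2 : 1 ≤ ∑ i, D i := (hD ⟨0, hk⟩).1.trans h1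
    exact_mod_cast h2
  generalize (∑ i, (D i : ℝ)) = d at *
  have hd0 : 0 < d := by linarith
  have h3 : γ * (f OPT - f X) ≤ d * (f (insert vstar X) - f X) := by
    have a := mul_le_mul_of_nonneg_left (sub_le_sub_right hle (f X)) hγ0
    have b := mul_le_mul_of_nonneg_right hLc hΔ
    linarith
  have h4 : γ / d * (f OPT - f X) ≤ f (insert vstar X) - f X := by
    rw [div_mul_eq_mul_div, div_le_iff₀ hd0]
    linarith
  have h5 : 0 ≤ 1 - γ / d := by
    rw [sub_nonneg, div_le_one hd0]
    linarith
  have h6 := mul_le_mul_of_nonneg_left hXval h5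
  rw [pow_succ]
  nlinarith [h6, h4]
end

section
/- Let V be a finite set, f : 2^V → ℝ a monotone function with f(S) ≥ 0 for all S, a partition matroid constraint with d = Σ_i d_i and d̄ = min_i d_i, and OPT a feasible maximizer of f. Let X₀ = ∅ and X_{j+1} = X_j ∪ {v_j}, where v_j maximizes f(X_j∪{v}) over all v ∈ V∖X_j with X_j∪{v} feasible (a greedy chain). Then for every integer m with 0 ≤ m ≤ d̄ and every γ with 0 ≤ γ ≤ 1 that is a submodularity-ratio lower bound for f with parameters (m, d), the set X_m is feasible, has |X_m| ≤ m, and satisfies f(X_m) ≥ [1 − (1 − γ/d)^m]·f(OPT). -/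
/-- Approximation guarantee of the greedy chain for monotone `f` under a partition
matroid constraint: starting from `X₀ = ∅` and repeatedly adding a greedy element,
for every `m ≤ d̄` and every submodularity-ratio lower bound `γ ∈ [0,1]` with
parameters `(m, d)`, the set `X_m` is feasible, has `|X_m| ≤ m`, and satisfies
`f X_m ≥ [1-(1-γ/d)^m]·f OPT`. -/
theorem greedy_chain_monotone {V : Type*} [Fintype V] [DecidableEq V] {k : ℕ}
    (hk : 0 < k)
    (B : Fin k → Finset V) (hpart : ∀ v : V, ∃! i, v ∈ B i)
    (hBne : ∀ i, (B i).Nonempty)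
    (D : Fin k → ℕ) (hD : ∀ i, 1 ≤ D i ∧ D i ≤ (B i).card)
    (dbar : ℕ)
    (hdbar : dbar = Finset.univ.inf' ⟨⟨0, hk⟩, Finset.mem_univ _⟩ D)
    (f : Finset V → ℝ) (hf0 : ∀ S, 0 ≤ f S)
    (hmono : ∀ X Y : Finset V, X ⊆ Y → f X ≤ f Y)
    (OPT : Finset V) (hOPTfeas : ∀ i, (OPT ∩ B i).card ≤ D i)
    (hOPTmax : ∀ S : Finset V, (∀ i, (S ∩ B i).card ≤ D i) → f S ≤ f OPT)
    (Xc : ℕ → Finset V) (hX0 : Xc 0 = ∅)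
    (hstep : ∀ j < dbar, ∃ v ∉ Xc j,
      Xc (j + 1) = insert v (Xc j) ∧
      (∀ i, ((insert v (Xc j)) ∩ B i).card ≤ D i) ∧
      ∀ w ∉ Xc j, (∀ i, ((insert w (Xc j)) ∩ B i).card ≤ D i) →
        f (insert w (Xc j)) ≤ f (insert v (Xc j)))
    (m : ℕ) (hm : m ≤ dbar)
    (γ : ℝ) (hγ0 : 0 ≤ γ) (hγ1 : γ ≤ 1)
    (hγ : ∀ S L : Finset V, Disjoint S L → S.card < m → L.card ≤ ∑ i, D i →
      γ * (f (S ∪ L) - f S) ≤ ∑ v ∈ L, (f (insert v S) - f S)) :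
    (∀ i, ((Xc m) ∩ B i).card ≤ D i) ∧
    (Xc m).card ≤ m ∧
    f (Xc m) ≥ (1 - (1 - γ / (∑ i, D i : ℝ)) ^ m) * f OPT := by
  have hdD : ∀ i, dbar ≤ D i := by
    intro i
    rw [hdbar]
    exact Finset.inf'_le D (Finset.mem_univ i)
  have hcard : ∀ j, j ≤ m → (Xc j).card ≤ j := by
    intro j
    induction j with
    | zero => intro _; simp [hX0]
    | succ j ih =>
      intro hj
      obtain ⟨v, -, hX, -, -⟩ := hstep j (by omega)
      rw [hX]
      have h1 := Finset.card_insert_le v (Xc j)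
      have h2 := ih (by omega)
      omega
  have hOPTcard : OPT.card ≤ ∑ i, D i := by
    have h1 : OPT ⊆ Finset.univ.biUnion (fun i => OPT ∩ B i) := by
      intro v hv
      obtain ⟨i, hi, -⟩ := hpart v
      simp only [Finset.mem_biUnion, Finset.mem_inter]
      exact ⟨i, Finset.mem_univ i, hv, hi⟩
    calc OPT.card ≤ _ := Finset.card_le_card h1
      _ ≤ ∑ i, (OPT ∩ B i).card := Finset.card_biUnion_le
      _ ≤ ∑ i, D i := Finset.sum_le_sum (fun i _ => hOPTfeas i)
  have hd1 : (1 : ℝ) ≤ ∑ i, (D i : ℝ) := by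
    have h1 : D ⟨0, hk⟩ ≤ ∑ i, D i :=
      Finset.single_le_sum (f := D) (fun i _ => Nat.zero_le _) (Finset.mem_univ _)
    have h2 := (hD ⟨0, hk⟩).1
    exact_mod_cast h2.trans h1
  have hOPTcardR : (OPT.card : ℝ) ≤ ∑ i, (D i : ℝ) := by exact_mod_cast hOPTcard
  set d : ℝ := ∑ i, (D i : ℝ) with hd
  have hdpos : 0 < d := by linarith
  have hq : 0 ≤ 1 - γ / d := by
    have : γ / d ≤ 1 := by
      rw [div_le_one hdpos]
      linarith
    linarith
  have hinc : ∀ j, j < m → γ * (f OPT - f (Xc j)) ≤ d * (f (Xc (j + 1)) - f (Xc j)) := by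
    intro j hj
    obtain ⟨v, hv, hX, -, hmax⟩ := hstep j (by omega)
    have hc := hcard j hj.le
    have h1 := hγ (Xc j) (OPT \ Xc j) Finset.disjoint_sdiff (by omega)
      ((Finset.card_le_card Finset.sdiff_subset).trans hOPTcard)
    have h2 : f OPT ≤ f (Xc j ∪ (OPT \ Xc j)) := by
      apply hmono
      intro x hx
      by_cases h : x ∈ Xc j <;> simp [h, hx]
    have h3 : ∑ w ∈ OPT \ Xc j, (f (insert w (Xc j)) - f (Xc j))
        ≤ ((OPT \ Xc j).card : ℝ) * (f (Xc (j + 1)) - f (Xc j)) := by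
      rw [← nsmul_eq_mul]
      apply Finset.sum_le_card_nsmul
      intro w hw
      have hw' := (Finset.mem_sdiff.mp hw).2
      have h4 := hmax w hw' (by
        intro i
        have h5 := Finset.card_le_card
          (Finset.inter_subset_left : insert w (Xc j) ∩ B i ⊆ insert w (Xc j))
        have h6 := Finset.card_insert_le w (Xc j)
        have h7 := hdD i
        omega)
      rw [hX]
      linarith
    have h8 : 0 ≤ f (Xc (j + 1)) - f (Xc j) := by
      rw [hX]
      exact sub_nonneg.mpr (hmono _ _ (Finset.subset_insert _ _))
    have h9 : ((OPT \ Xc j).card : ℝ) ≤ d := by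
      refine le_trans ?_ hOPTcardR
      exact_mod_cast Finset.card_le_card Finset.sdiff_subset
    have h10 := mul_le_mul_of_nonneg_right h9 h8
    have h11 := mul_le_mul_of_nonneg_left (sub_le_sub_right h2 (f (Xc j))) hγ0
    linarith
  refine ⟨?_, hcard m le_rfl, ?_⟩
  · intro i
    have h1 := hcard m le_rfl
    have h2 := hdD i
    have h3 := Finset.card_le_card (Finset.inter_subset_left : Xc m ∩ B i ⊆ Xc m)
    omega
  · have key : ∀ j, j ≤ m → f OPT - f (Xc j) ≤ (1 - γ / d) ^ j * f OPT := by
      intro j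
      induction j with
      | zero =>
        intro _
        have := hf0 (Xc 0)
        simpa using this
      | succ j ih =>
        intro hj
        have h1 := hinc j (by omega)
        have h2 := mul_le_mul_of_nonneg_left (ih (by omega)) hq
        have h3 : γ / d * (f OPT - f (Xc j)) ≤ f (Xc (j + 1)) - f (Xc j) := by
          rw [div_mul_eq_mul_div, div_le_iff₀ hdpos]
          linarith
        rw [pow_succ]
        linarith
    have := key m le_rfl
    linarith
end

section
/- Let V be a finite set, f : 2^V → ℝ a monotone function with f(S) ≥ 0 for all S, a partition matroid constraint with d = Σ_i d_i and d̄ = min_i d_i, and OPT a feasible maximizer of f. Let X₀ = ∅ and X_{j+1} = X_j ∪ {v_j}, where v_j maximizes f(X_j∪{v}) over all v ∈ V∖X_j with X_j∪{v} feasible. Then for every integer m with 0 ≤ m ≤ d̄ and every γ with 0 ≤ γ ≤ 1 that is a submodularity-ratio lower bound for f with parameters (m, d), one has f(X_m) ≥ (1 − e^{−γm/d})·f(OPT). -/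
/-- Exponential-form approximation guarantee of the greedy chain for monotone `f`:
for every `m ≤ d̄` and every submodularity-ratio lower bound `γ ∈ [0,1]` with
parameters `(m, d)`, one has `f X_m ≥ (1 - e^{-γm/d})·f OPT`. -/
theorem greedy_chain_monotone_exp {V : Type*} [Fintype V] [DecidableEq V] {k : ℕ}
    (hk : 0 < k)
    (B : Fin k → Finset V) (hpart : ∀ v : V, ∃! i, v ∈ B i)
    (hBne : ∀ i, (B i).Nonempty)
    (D : Fin k → ℕ) (hD : ∀ i, 1 ≤ D i ∧ D i ≤ (B i).card)
    (dbar : ℕ)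
    (hdbar : dbar = Finset.univ.inf' ⟨⟨0, hk⟩, Finset.mem_univ _⟩ D)
    (f : Finset V → ℝ) (hf0 : ∀ S, 0 ≤ f S)
    (hmono : ∀ X Y : Finset V, X ⊆ Y → f X ≤ f Y)
    (OPT : Finset V) (hOPTfeas : ∀ i, (OPT ∩ B i).card ≤ D i)
    (hOPTmax : ∀ S : Finset V, (∀ i, (S ∩ B i).card ≤ D i) → f S ≤ f OPT)
    (Xc : ℕ → Finset V) (hX0 : Xc 0 = ∅)
    (hstep : ∀ j < dbar, ∃ v ∉ Xc j,
      Xc (j + 1) = insert v (Xc j) ∧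
      (∀ i, ((insert v (Xc j)) ∩ B i).card ≤ D i) ∧
      ∀ w ∉ Xc j, (∀ i, ((insert w (Xc j)) ∩ B i).card ≤ D i) →
        f (insert w (Xc j)) ≤ f (insert v (Xc j)))
    (m : ℕ) (hm : m ≤ dbar)
    (γ : ℝ) (hγ0 : 0 ≤ γ) (hγ1 : γ ≤ 1)
    (hγ : ∀ S L : Finset V, Disjoint S L → S.card < m → L.card ≤ ∑ i, D i →
      γ * (f (S ∪ L) - f S) ≤ ∑ v ∈ L, (f (insert v S) - f S)) :
    f (Xc m) ≥ (1 - Real.exp (-(γ * m) / (∑ i, D i : ℝ))) * f OPT := by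
  classical
  have hdb : ∀ i, dbar ≤ D i := fun i => by
    rw [hdbar]; exact Finset.inf'_le _ (Finset.mem_univ i)
  have hcard : ∀ j, j ≤ dbar → (Xc j).card = j := by
    intro j
    induction j with
    | zero => intro _; simp [hX0]
    | succ j ih =>
      intro hj
      obtain ⟨v, hv, he, -, -⟩ := hstep j (by omega)
      rw [he, Finset.card_insert_of_notMem hv, ih (by omega)]
  have hfeas : ∀ S : Finset V, S.card ≤ dbar → ∀ i, (S ∩ B i).card ≤ D i := fun S hS i =>
    (Finset.card_le_card Finset.inter_subset_left).trans (hS.trans (hdb i))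
  have hOPTcard : OPT.card ≤ ∑ i, D i := by
    have h1 : OPT ⊆ Finset.univ.biUnion (fun i => OPT ∩ B i) := by
      intro v hv
      obtain ⟨i, hi, -⟩ := hpart v
      exact Finset.mem_biUnion.2 ⟨i, Finset.mem_univ _, Finset.mem_inter.2 ⟨hv, hi⟩⟩
    exact (Finset.card_le_card h1).trans
      (Finset.card_biUnion_le.trans (Finset.sum_le_sum fun i _ => hOPTfeas i))
  have hdposN : 0 < ∑ i, D i :=
    lt_of_lt_of_le (hD ⟨0, hk⟩).1
      (Finset.single_le_sum (f := D) (fun i _ => Nat.zero_le _) (Finset.mem_univ _))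
  have hcast : (∑ i, (D i : ℝ)) = ((∑ i, D i : ℕ) : ℝ) := by push_cast; rfl
  rw [hcast]
  generalize (∑ i, D i) = d at *
  have hd : (0 : ℝ) < d := by exact_mod_cast hdposN
  have key : ∀ j, j ≤ m → f OPT - f (Xc j) ≤ Real.exp (-(γ * j) / d) * f OPT := by
    intro j
    induction j with
    | zero => intro _; simp [hf0]
    | succ j ih =>
      intro hj
      have ih := ih (by omega)
      have hc := hcard j (by omega)
      obtain ⟨v, hv, he, -, hmax⟩ := hstep j (by omega)
      have hg : 0 ≤ f OPT - f (Xc j) :=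
        sub_nonneg.2 (hOPTmax _ (hfeas _ (by omega)))
      have hLc : (OPT \ Xc j).card ≤ d :=
        (Finset.card_le_card Finset.sdiff_subset).trans hOPTcard
      have h1 := hγ (Xc j) (OPT \ Xc j) Finset.disjoint_sdiff (by omega) hLc
      have h2 : ∑ w ∈ OPT \ Xc j, (f (insert w (Xc j)) - f (Xc j)) ≤
          (OPT \ Xc j).card • (f (Xc (j+1)) - f (Xc j)) := by
        apply Finset.sum_le_card_nsmul
        intro w hw
        have hw' := (Finset.mem_sdiff.1 hw).2
        rw [he]
        have := hmax w hw' (hfeas _ (by rw [Finset.card_insert_of_notMem hw']; omega))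
        linarith
      have h3 : f OPT ≤ f (Xc j ∪ (OPT \ Xc j)) := by
        apply hmono
        intro x hx
        by_cases hxx : x ∈ Xc j <;> simp [hx, hxx]
      have h4 : 0 ≤ f (Xc (j+1)) - f (Xc j) := by
        rw [he]; exact sub_nonneg.2 (hmono _ _ (Finset.subset_insert _ _))
      have h5 : γ * (f OPT - f (Xc j)) ≤ d * (f (Xc (j+1)) - f (Xc j)) := by
        rw [nsmul_eq_mul] at h2
        have h6 : ((OPT \ Xc j).card : ℝ) ≤ d := by exact_mod_cast hLc
        have h7 := mul_le_mul_of_nonneg_right h6 h4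
        have h8 : γ * (f OPT - f (Xc j)) ≤ γ * (f (Xc j ∪ (OPT \ Xc j)) - f (Xc j)) :=
          mul_le_mul_of_nonneg_left (by linarith) hγ0
        linarith
      have h6 : γ / d * (f OPT - f (Xc j)) ≤ f (Xc (j+1)) - f (Xc j) := by
        rw [div_mul_eq_mul_div, div_le_iff₀ hd]; linarith
      have h7 : 1 - γ / d ≤ Real.exp (-(γ / d)) := by
        have := Real.add_one_le_exp (-(γ / d)); linarith
      have h8 : Real.exp (-(γ * ((j + 1 : ℕ) : ℝ)) / d) =
          Real.exp (-(γ / d)) * Real.exp (-(γ * j) / d) := by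
        rw [← Real.exp_add]; congr 1; push_cast; ring
      rw [h8, mul_assoc]
      calc f OPT - f (Xc (j+1)) ≤ (1 - γ / d) * (f OPT - f (Xc j)) := by linarith
        _ ≤ Real.exp (-(γ / d)) * (f OPT - f (Xc j)) := mul_le_mul_of_nonneg_right h7 hg
        _ ≤ _ := mul_le_mul_of_nonneg_left ih (Real.exp_pos _).le
  have := key m le_rfl
  linarith
end

section
/- Let V be a finite set, f : 2^V → ℝ a monotone function with f(S) ≥ 0 for all S, and a partition matroid constraint on V with d̄ = min_i d_i. Let d*₁,…,d*_k be new thresholds with 1 ≤ d*_i ≤ |B_i|, d* = Σ_i d*_i and d̄* = min_i d*_i, assume d̄* > d̄, and let OPT* be a D*-feasible maximizer of f. Let γ with 0 ≤ γ ≤ 1 be a submodularity-ratio lower bound for f with parameters (d̄*, d*). Suppose X₀ ⊆ V satisfies |X₀| ≤ d̄ and f(X₀) ≥ [1 − (1 − γ/d*)^{d̄}]·f(OPT*). Define X_{j+1} = X_j ∪ {v_j}, where v_j maximizes f(X_j∪{v}) over all v ∈ V∖X_j with X_j∪{v} D*-feasible. Then the set Y = X_{d̄*−d̄} obtained after d̄*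 − d̄ such greedy additions is D*-feasible, has |Y| ≤ d̄*, and satisfies f(Y) ≥ [1 − (1 − γ/d*)^{d̄*}]·f(OPT*) ≥ (1 − e^{−γ·d̄*/d*})·f(OPT*). -/
/-- Adaptation after a threshold increase (`d̄* > d̄`), monotone case: if `γ ∈ [0,1]`
is a submodularity-ratio lower bound for `f` with parameters `(d̄*, d*)`, `X₀` has
`|X₀| ≤ d̄` and `f X₀ ≥ [1-(1-γ/d*)^d̄]·f OPT*`, then the set `Y = X_{d̄*-d̄}`
obtained after `d̄*-d̄` greedy additions (with respect to the new thresholds `D*`)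
is `D*`-feasible, has `|Y| ≤ d̄*`, and satisfies both
`f Y ≥ [1-(1-γ/d*)^{d̄*}]·f OPT*` and `f Y ≥ (1-e^{-γ·d̄*/d*})·f OPT*`. -/
theorem adaptation_monotone {V : Type*} [Fintype V] [DecidableEq V] {k : ℕ}
    (hk : 0 < k)
    (B : Fin k → Finset V) (hpart : ∀ v : V, ∃! i, v ∈ B i)
    (hBne : ∀ i, (B i).Nonempty)
    (D Dstar : Fin k → ℕ)
    (hD : ∀ i, 1 ≤ D i ∧ D i ≤ (B i).card)
    (hDstar : ∀ i, 1 ≤ Dstar i ∧ Dstar i ≤ (B i).card)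
    (dbar dbarstar : ℕ)
    (hdbar : dbar = Finset.univ.inf' ⟨⟨0, hk⟩, Finset.mem_univ _⟩ D)
    (hdbarstar : dbarstar = Finset.univ.inf' ⟨⟨0, hk⟩, Finset.mem_univ _⟩ Dstar)
    (hgt : dbar < dbarstar)
    (f : Finset V → ℝ) (hf0 : ∀ S, 0 ≤ f S)
    (hmono : ∀ X Y : Finset V, X ⊆ Y → f X ≤ f Y)
    (OPTstar : Finset V) (hOPTfeas : ∀ i, (OPTstar ∩ B i).card ≤ Dstar i)
    (hOPTmax : ∀ S : Finset V, (∀ i, (S ∩ B i).card ≤ Dstar i) → f S ≤ f OPTstar)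
    (γ : ℝ) (hγ0 : 0 ≤ γ) (hγ1 : γ ≤ 1)
    (hγ : ∀ S L : Finset V, Disjoint S L → S.card < dbarstar → L.card ≤ ∑ i, Dstar i →
      γ * (f (S ∪ L) - f S) ≤ ∑ v ∈ L, (f (insert v S) - f S))
    (Xc : ℕ → Finset V)
    (hX0card : (Xc 0).card ≤ dbar)
    (hX0val : f (Xc 0) ≥ (1 - (1 - γ / (∑ i, Dstar i : ℝ)) ^ dbar) * f OPTstar)
    (hstep : ∀ j < dbarstar - dbar, ∃ v ∉ Xc j,
      Xc (j + 1) = insert v (Xc j) ∧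
      (∀ i, ((insert v (Xc j)) ∩ B i).card ≤ Dstar i) ∧
      ∀ w ∉ Xc j, (∀ i, ((insert w (Xc j)) ∩ B i).card ≤ Dstar i) →
        f (insert w (Xc j)) ≤ f (insert v (Xc j))) :
    (∀ i, ((Xc (dbarstar - dbar)) ∩ B i).card ≤ Dstar i) ∧
    (Xc (dbarstar - dbar)).card ≤ dbarstar ∧
    f (Xc (dbarstar - dbar)) ≥
      (1 - (1 - γ / (∑ i, Dstar i : ℝ)) ^ dbarstar) * f OPTstar ∧
    f (Xc (dbarstar - dbar)) ≥
      (1 - Real.exp (-(γ * dbarstar) / (∑ i, Dstar i : ℝ))) * f OPTstar := by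
  have hle : ∀ i, dbarstar ≤ Dstar i := fun i => by
    rw [hdbarstar]; exact Finset.inf'_le _ (Finset.mem_univ i)
  have hd1N : 1 ≤ ∑ i, Dstar i :=
    le_trans (hDstar ⟨0, hk⟩).1
      (Finset.single_le_sum (f := Dstar) (fun i _ => Nat.zero_le _) (Finset.mem_univ _))
  have hcast : (∑ i, (Dstar i : ℝ)) = ((∑ i, Dstar i : ℕ) : ℝ) := by push_cast; rfl
  have hOPTcard : OPTstar.card ≤ ∑ i, Dstar i := by
    have hsub : OPTstar ⊆ Finset.univ.biUnion (fun i => OPTstar ∩ B i) := by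
      intro v hv
      obtain ⟨i, hi, _⟩ := hpart v
      exact Finset.mem_biUnion.2 ⟨i, Finset.mem_univ _, Finset.mem_inter.2 ⟨hv, hi⟩⟩
    exact (Finset.card_le_card hsub).trans
      (Finset.card_biUnion_le.trans (Finset.sum_le_sum fun i _ => hOPTfeas i))
  rw [hcast] at hX0val ⊢
  generalize hN : (∑ i, Dstar i) = N at *
  have hd1 : (1 : ℝ) ≤ (N : ℝ) := by exact_mod_cast hd1N
  have hd0 : (0 : ℝ) < (N : ℝ) := by linarith
  have hq0 : 0 ≤ 1 - γ / (N : ℝ) := by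
    have : γ / (N : ℝ) ≤ 1 := by rw [div_le_one hd0]; linarith
    linarith
  have hfeas : ∀ S : Finset V, S.card ≤ dbarstar → ∀ i, (S ∩ B i).card ≤ Dstar i :=
    fun S hS i => (Finset.card_le_card Finset.inter_subset_left).trans (hS.trans (hle i))
  have hmain : ∀ j, j ≤ dbarstar - dbar → (Xc j).card ≤ dbar + j ∧
      f (Xc j) ≥ (1 - (1 - γ / (N : ℝ)) ^ (dbar + j)) * f OPTstar := by
    intro j
    induction j with
    | zero => intro _; exact ⟨hX0card, hX0val⟩
    | succ j ih =>
      intro hj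
      obtain ⟨hc, hv⟩ := ih (by omega)
      obtain ⟨v, hvn, hX, _, hmax⟩ := hstep j (by omega)
      rw [hX]
      have hci : ∀ w, (insert w (Xc j)).card ≤ dbar + (j + 1) := fun w =>
        (Finset.card_insert_le _ _).trans (by omega)
      refine ⟨hci v, ?_⟩
      have h1 := hγ (Xc j) (OPTstar \ Xc j) Finset.disjoint_sdiff (by omega)
        ((Finset.card_le_card Finset.sdiff_subset).trans hOPTcard)
      have h2 : ∑ w ∈ OPTstar \ Xc j, (f (insert w (Xc j)) - f (Xc j)) ≤
          (OPTstar \ Xc j).card • (f (insert v (Xc j)) - f (Xc j)) := by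
        apply Finset.sum_le_card_nsmul
        intro w hw
        have := hmax w (Finset.mem_sdiff.1 hw).2
          (hfeas _ ((hci w).trans (by omega)))
        linarith
      have hδ : 0 ≤ f (insert v (Xc j)) - f (Xc j) := by
        have := hmono _ _ (Finset.subset_insert v (Xc j)); linarith
      have h3 : ((OPTstar \ Xc j).card : ℝ) ≤ N := by
        exact_mod_cast (Finset.card_le_card Finset.sdiff_subset).trans hOPTcard
      have h4 : f OPTstar ≤ f (Xc j ∪ (OPTstar \ Xc j)) := by
        apply hmono
        intro x hx
        simp only [Finset.mem_union, Finset.mem_sdiff]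
        tauto
      rw [nsmul_eq_mul] at h2
      have h5 := mul_le_mul_of_nonneg_right h3 hδ
      have h6 : γ * (f OPTstar - f (Xc j)) ≤
          γ * (f (Xc j ∪ (OPTstar \ Xc j)) - f (Xc j)) :=
        mul_le_mul_of_nonneg_left (by linarith) hγ0
      have h7 : γ / N * (f OPTstar - f (Xc j)) ≤ f (insert v (Xc j)) - f (Xc j) := by
        rw [div_mul_eq_mul_div, div_le_iff₀ hd0]
        linarith
      have h8 := mul_le_mul_of_nonneg_left hv hq0
      have h9 : (1 - γ / (N : ℝ)) ^ (dbar + (j + 1)) =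
          (1 - γ / (N : ℝ)) * (1 - γ / (N : ℝ)) ^ (dbar + j) := by
        rw [← add_assoc, pow_succ, mul_comm]
      rw [h9]
      generalize (1 - γ / (N : ℝ)) ^ (dbar + j) = P at *
      generalize γ / (N : ℝ) = c at *
      nlinarith
  obtain ⟨hc, hv⟩ := hmain _ le_rfl
  rw [show dbar + (dbarstar - dbar) = dbarstar by omega] at hc hv
  refine ⟨hfeas _ hc, hc, hv, ge_trans hv ?_⟩
  apply mul_le_mul_of_nonneg_right _ (hf0 _)
  have h1 : 1 - γ / (N : ℝ) ≤ Real.exp (-(γ / N)) := by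
    have := Real.add_one_le_exp (-(γ / (N : ℝ))); linarith
  have h2 := pow_le_pow_left₀ hq0 h1 dbarstar
  rw [← Real.exp_nat_mul] at h2
  rw [show -(γ * dbarstar) / (N : ℝ) = dbarstar * -(γ / N) by ring]
  linarith
end
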